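/- arXiv:1408.5154 — 2 statements merged into one kernel-verified Lean document; each statement's English description precedes it below -/
import Mathlib

section
/- Let V be a finite-dimensional real normed vector space and let S ⊆ V be a set of vectors. Let C be the topological closure of the convex cone generated by S, i.e. the closure of the set of all finite linear combinations of elements of S with nonnegative real coefficients. Assume C is full-dimensional (C spans V as a real vector space) and salient (if x ∈ C and −x ∈ C then x = 0). If α ∈ C spans an extremal ray of C, then there exist a sequence (s_j) of elements of S and positive real numbers r_j such that r_j • s_j converges to α. -/
open Filter Topology

theorem isCompact_convexHull_aux {V : Type*} [NormedAddCommGroup V] [NormedSpace ℝ V]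
    [FiniteDimensional ℝ V] {K : Set V} (hK : IsCompact K) : IsCompact (convexHull ℝ K) := by
  rcases K.eq_empty_or_nonempty with rfl | ⟨x₀, hx₀⟩
  · simp
  set d := Module.finrank ℝ V + 1 with hd
  have hc : IsCompact ((stdSimplex ℝ (Fin d)) ×ˢ (Set.univ.pi fun _ : Fin d => K)) :=
    (isCompact_stdSimplex ℝ (Fin d)).prod (isCompact_univ_pi fun _ => hK)
  have hcont : Continuous (fun p : (Fin d → ℝ) × (Fin d → V) => ∑ i, p.1 i • p.2 i) := by
    fun_prop
  convert hc.image hcont using 1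
  apply Set.Subset.antisymm
  · intro x hx
    obtain ⟨ι, _, z, w, hz, hai, hw, hw1, hsum⟩ := eq_pos_convex_span_of_mem_convexHull hx
    have hcard : Fintype.card ι ≤ Fintype.card (Fin d) := by
      rw [Fintype.card_fin]
      exact hai.card_le_finrank_succ.trans (Nat.succ_le_succ (Submodule.finrank_le _))
    obtain ⟨e⟩ := Function.Embedding.nonempty_of_card_le hcard
    refine ⟨(Function.extend e w 0, Function.extend e z fun _ => x₀), ⟨⟨?_, ?_⟩, ?_⟩, ?_⟩
    · intro i
      by_cases h : ∃ a, e a = i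
      · obtain ⟨a, rfl⟩ := h
        simpa [e.injective.extend_apply] using (hw a).le
      · simp [Function.extend_apply' _ _ _ h]
    · rw [← hw1]
      refine (Fintype.sum_of_injective e e.injective _ _ ?_ ?_).symm
      · intro i hi
        simp [Function.extend_apply' _ _ _ (by simpa using hi)]
      · intro a
        simp [e.injective.extend_apply]
    · intro i _
      by_cases h : ∃ a, e a = i
      · obtain ⟨a, rfl⟩ := h
        simpa [e.injective.extend_apply] using hz ⟨a, rfl⟩
      · simpa [Function.extend_apply' _ _ _ h] using hx₀
    · rw [← hsum]
      refine (Fintype.sum_of_injective e e.injective _ _ ?_ ?_).symm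
      · intro i hi
        have hi' : ¬ ∃ a, e a = i := hi
        simp [Function.extend_apply' _ _ _ hi']
      · intro a
        simp [e.injective.extend_apply]
  · rintro _ ⟨⟨w, z⟩, ⟨⟨hw, hw1⟩, hz⟩, rfl⟩
    exact (convex_convexHull ℝ K).sum_mem (fun i _ => hw i) hw1
      (fun i _ => subset_convexHull ℝ K (hz i trivial))

/-- Lemma 5.2 ('irraprox') of the paper: if `C` is the closure of the convex cone generated
by a set `S`, is full-dimensional and salient, and `α ∈ C` spans an extremal ray of `C`,
then `α` is a limit of positive rescalings of elements of `S`. -/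
theorem stmt_0 {V : Type*} [NormedAddCommGroup V] [NormedSpace ℝ V]
    [FiniteDimensional ℝ V] (S : Set V) (C : Set V)
    (hC : C = closure {x : V | ∃ (n : ℕ) (c : Fin n → ℝ) (s : Fin n → V),
      (∀ i, 0 ≤ c i) ∧ (∀ i, s i ∈ S) ∧ x = ∑ i, c i • s i})
    (hfull : Submodule.span ℝ C = ⊤)
    (hsalient : ∀ x ∈ C, -x ∈ C → x = 0)
    (α : V) (hαC : α ∈ C) (hα0 : α ≠ 0)
    (hext : ∀ x ∈ C, ∀ y ∈ C, x + y = α →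
      (∃ t : ℝ, 0 ≤ t ∧ x = t • α) ∧ (∃ t : ℝ, 0 ≤ t ∧ y = t • α)) :
    ∃ (s : ℕ → V) (r : ℕ → ℝ), (∀ j, s j ∈ S) ∧ (∀ j, 0 < r j) ∧
      Tendsto (fun j => r j • s j) atTop (𝓝 α) := by
  classical
  set D : Set V := {x : V | ∃ (n : ℕ) (c : Fin n → ℝ) (s : Fin n → V),
      (∀ i, 0 ≤ c i) ∧ (∀ i, s i ∈ S) ∧ x = ∑ i, c i • s i} with hD
  have hDadd : ∀ x ∈ D, ∀ y ∈ D, x + y ∈ D := by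
    rintro x ⟨n, c, s, hc, hs, rfl⟩ y ⟨m, d, t, hd, ht, rfl⟩
    refine ⟨n + m, Fin.append c d, Fin.append s t, ?_, ?_, ?_⟩
    · intro i
      refine Fin.addCases (fun i => ?_) (fun i => ?_) i
      · simpa using hc i
      · simpa using hd i
    · intro i
      refine Fin.addCases (fun i => ?_) (fun i => ?_) i
      · simpa using hs i
      · simpa using ht i
    · simp [Fin.sum_univ_add]
  have hDsmul : ∀ a : ℝ, 0 ≤ a → ∀ x ∈ D, a • x ∈ D := by
    rintro a ha x ⟨n, c, s, hc, hs, rfl⟩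
    exact ⟨n, fun i => a * c i, s, fun i => mul_nonneg ha (hc i), hs, by
      simp [Finset.smul_sum, mul_smul]⟩
  have hDS : ∀ x ∈ S, x ∈ D := fun x hx =>
    ⟨1, fun _ => 1, fun _ => x, fun _ => zero_le_one, fun _ => hx, by simp⟩
  have hDC : D ⊆ C := hC ▸ subset_closure
  have hCcl : IsClosed C := hC ▸ isClosed_closure
  have hCadd : ∀ x ∈ C, ∀ y ∈ C, x + y ∈ C := by
    intro x hx y hy
    rw [hC] at hx hy ⊢
    exact map_mem_closure₂ continuous_add hx hy hDadd
  have hCsmul : ∀ a : ℝ, 0 ≤ a → ∀ x ∈ C, a • x ∈ C := by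
    intro a ha x hx
    rw [hC] at hx ⊢
    exact map_mem_closure (continuous_const_smul a) hx (hDsmul a ha)
  have hC0 : (0 : V) ∈ C := by simpa using hCsmul 0 le_rfl α hαC
  have hCsum : ∀ (ι : Type) (t : Finset ι) (f : ι → V), (∀ i ∈ t, f i ∈ C) →
      ∑ i ∈ t, f i ∈ C := by
    intro ι t f hf
    exact Finset.sum_induction f (· ∈ C) (fun x y hx hy => hCadd x hx y hy) hC0 hf
  have hCconv : Convex ℝ C := by
    intro x hx y hy a b ha hb _
    exact hCadd _ (hCsmul a ha x hx) _ (hCsmul b hb y hy)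
  -- the positive functional
  obtain ⟨l, δ, hδ, hl⟩ : ∃ (l : V →L[ℝ] ℝ) (δ : ℝ), 0 < δ ∧ ∀ x ∈ C, δ * ‖x‖ ≤ l x := by
    set K : Set V := C ∩ Metric.sphere 0 1 with hK
    have hKc : IsCompact K := (isCompact_sphere 0 1).inter_left hCcl
    have h0 : (0 : V) ∉ convexHull ℝ K := by
      intro h
      rw [mem_convexHull_iff_exists_fintype] at h
      obtain ⟨ι, _, w, z, hw, hw1, hz, hsum⟩ := h
      have : ∃ i, w i ≠ 0 := by
        by_contra! hcon
        simp [hcon] at hw1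
      obtain ⟨i, hi⟩ := this
      rw [← Finset.add_sum_erase _ _ (Finset.mem_univ i)] at hsum
      have h1 : w i • z i ∈ C := hCsmul _ (hw i) _ (hz i).1
      have h2 : -(w i • z i) ∈ C := by
        rw [neg_eq_of_add_eq_zero_right hsum]
        exact Finset.sum_induction _ (· ∈ C) (fun x y hx hy => hCadd x hx y hy) hC0
          (fun j _ => hCsmul _ (hw j) _ (hz j).1)
      have h3 := hsalient _ h1 h2
      have h4 : z i = 0 := (smul_eq_zero.1 h3).resolve_left hi
      have h5 := (hz i).2
      simp [h4] at h5
    obtain ⟨f, u, hu, hf⟩ := geometric_hahn_banach_point_closed (convex_convexHull ℝ K)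
      (isCompact_convexHull_aux hKc).isClosed h0
    refine ⟨f, u, by simpa using hu, fun x hx => ?_⟩
    by_cases hx0 : x = 0
    · simp [hx0]
    have hn : 0 < ‖x‖ := norm_pos_iff.2 hx0
    have hk : ‖x‖⁻¹ • x ∈ K := by
      refine ⟨hCsmul _ (by positivity) x hx, ?_⟩
      simp [norm_smul, hn.ne']
    have := (hf _ (subset_convexHull ℝ K hk)).le
    rw [map_smul, smul_eq_mul, inv_mul_eq_div, le_div_iff₀ hn] at this
    exact this
  have hl0 : ∀ x ∈ C, 0 ≤ l x := fun x hx => le_trans (by positivity) (hl x hx)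
  have hlα : 0 < l α := lt_of_lt_of_le (by have := norm_pos_iff.2 hα0; positivity) (hl α hαC)
  have hlz : ∀ x ∈ C, l x = 0 → x = 0 := by
    intro x hx h
    have h1 := hl x hx
    rw [h] at h1
    have : ‖x‖ ≤ 0 := by
      by_contra! h2
      have := mul_pos hδ h2
      linarith
    exact norm_le_zero_iff.1 this
  set T : Set V := {x | ∃ r : ℝ, 0 < r ∧ ∃ s ∈ S, x = r • s} with hT
  have hTC : T ⊆ C := by
    rintro _ ⟨r, hr, s, hs, rfl⟩
    exact hCsmul r hr.le s (hDC (hDS s hs))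
  set K : Set V := closure T ∩ l ⁻¹' {1} with hK
  have hKC : K ⊆ C ∩ l ⁻¹' {1} :=
    Set.inter_subset_inter_left _ (closure_minimal hTC hCcl)
  have hKcl : IsClosed K := isClosed_closure.inter (isClosed_singleton.preimage l.continuous)
  have hKc : IsCompact K := by
    refine Metric.isCompact_of_isClosed_isBounded hKcl ?_
    refine (Metric.isBounded_closedBall (x := (0 : V)) (r := δ⁻¹)).subset ?_
    intro x hx
    have hx' := hKC hx
    have h1 := hl x hx'.1
    have h2 : l x = 1 := hx'.2
    rw [mem_closedBall_zero_iff, ← one_div, le_div_iff₀ hδ]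
    linarith
  have hHcl : IsClosed (convexHull ℝ K) := (isCompact_convexHull_aux hKc).isClosed
  have hHC : convexHull ℝ K ⊆ C ∩ l ⁻¹' {1} := by
    refine convexHull_min hKC (hCconv.inter ?_)
    exact (convex_singleton (1 : ℝ)).linear_preimage l.toLinearMap
  have hDH : ∀ x ∈ D, l x ≠ 0 → (l x)⁻¹ • x ∈ convexHull ℝ K := by
    rintro x ⟨n, c, s, hc, hs, rfl⟩ hx
    set w : Fin n → ℝ := fun i => l (c i • s i) with hw
    have hcs : ∀ i, c i • s i ∈ C := fun i => hCsmul _ (hc i) _ (hDC (hDS _ (hs i)))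
    have hw0 : ∀ i, 0 ≤ w i := fun i => hl0 _ (hcs i)
    have hlsum : l (∑ i, c i • s i) = ∑ i, w i := by rw [map_sum]
    have hsw : 0 < ∑ i, w i :=
      lt_of_le_of_ne (Finset.sum_nonneg fun i _ => hw0 i) (by rw [← hlsum]; exact hx.symm)
    have e : (l (∑ i, c i • s i))⁻¹ • (∑ i, c i • s i) =
        Finset.univ.centerMass w (fun i => (w i)⁻¹ • (c i • s i)) := by
      rw [Finset.centerMass, hlsum]
      congr 1
      refine Finset.sum_congr rfl fun i _ => ?_
      by_cases h : w i = 0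
      · rw [h, zero_smul]
        exact hlz _ (hcs i) h
      · rw [smul_inv_smul₀ h]
    rw [e, ← Finset.centerMass_filter_ne_zero]
    refine Finset.centerMass_mem_convexHull _ (fun i _ => hw0 i) ?_ ?_
    · rw [Finset.sum_filter_ne_zero]
      exact hsw
    · intro i hi
      have hi' : w i ≠ 0 := (Finset.mem_filter.1 hi).2
      have hci : c i ≠ 0 := by
        intro h
        apply hi'
        simp [hw, h]
      have hwp : 0 < w i := lt_of_le_of_ne (hw0 i) hi'.symm
      have hcp : 0 < c i := lt_of_le_of_ne (hc i) hci.symm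
      refine ⟨subset_closure ⟨(w i)⁻¹ * c i, by positivity, s i, hs i, by rw [mul_smul]⟩, ?_⟩
      show l ((w i)⁻¹ • (c i • s i)) = 1
      rw [map_smul, smul_eq_mul]
      exact inv_mul_cancel₀ hi'
  set β : V := (l α)⁻¹ • α with hβ
  have hβα : l α • β = α := smul_inv_smul₀ hlα.ne' α
  have hlβ : l β = 1 := by
    rw [hβ, map_smul, smul_eq_mul]
    exact inv_mul_cancel₀ hlα.ne'
  have hβH : β ∈ convexHull ℝ K := by
    have hα' : α ∈ closure D := hC ▸ hαC
    obtain ⟨x, hxD, hx⟩ := mem_closure_iff_seq_limit.1 hα'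
    have hlx : Tendsto (fun n => l (x n)) atTop (𝓝 (l α)) := (l.continuous.tendsto α).comp hx
    refine hHcl.mem_of_tendsto ((hlx.inv₀ hlα.ne').smul hx) ?_
    filter_upwards [hlx.eventually_ne hlα.ne'] with n hn
    exact hDH _ (hxD n) hn
  have key : ∀ x ∈ C, l x = 1 → (∃ t : ℝ, 0 ≤ t ∧ x = t • α) → x = β := by
    rintro x - h1 ⟨t, -, rfl⟩
    rw [map_smul, smul_eq_mul] at h1
    rw [hβ, eq_inv_of_mul_eq_one_left h1]
  have hβe : β ∈ (convexHull ℝ K).extremePoints ℝ := by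
    rw [mem_extremePoints]
    refine ⟨hβH, ?_⟩
    rintro x hx y hy ⟨a, b, ha, hb, hab, hxy⟩
    have hx' := hHC hx
    have hy' := hHC hy
    have h := hext ((l α * a) • x) (hCsmul _ (by positivity) _ hx'.1)
      ((l α * b) • y) (hCsmul _ (by positivity) _ hy'.1)
      (by rw [mul_smul, mul_smul, ← smul_add, hxy, hβα])
    have aux : ∀ (p : ℝ) (z : V), 0 < p → (∃ t : ℝ, 0 ≤ t ∧ p • z = t • α) →
        ∃ t : ℝ, 0 ≤ t ∧ z = t • α := by
      rintro p z hp ⟨t, ht, h⟩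
      refine ⟨p⁻¹ * t, by positivity, ?_⟩
      rw [mul_smul, ← h, inv_smul_smul₀ hp.ne']
    exact ⟨key x hx'.1 hx'.2 (aux _ _ (by positivity) h.1),
      key y hy'.1 hy'.2 (aux _ _ (by positivity) h.2)⟩
  have hβK : β ∈ K := extremePoints_convexHull_subset hβe
  obtain ⟨x, hxT, hx⟩ := mem_closure_iff_seq_limit.1 hβK.1
  choose r hr s hs hrs using hxT
  refine ⟨s, fun j => l α * r j, hs, fun j => mul_pos hlα (hr j), ?_⟩
  have := hx.const_smul (l α)
  rw [hβα] at this
  refine this.congr fun j => ?_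
  rw [hrs j, mul_smul]
end

section
/- Let T : V → W be a continuous linear map between finite-dimensional real normed vector spaces, let C ⊆ V be a closed convex cone, let D ⊆ W be a subset, and let S ⊆ D be a subset that is dense in D. Suppose there is a constant κ > 0 such that every s ∈ S admits c ∈ C with T(c) = s and ‖c‖ ≤ κ·‖s‖. Then D ⊆ T(C). -/
/-- Convex-geometry skeleton of Corollary 3.14: if every element of a dense subset `S` of
`D` admits a norm-bounded lift to a closed convex cone `C` along a continuous linear map
`T`, then all of `D` lies in the image `T(C)`. -/
theorem stmt_8 {V W : Type*} [NormedAddCommGroup V] [NormedSpace ℝ V]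
    [FiniteDimensional ℝ V] [NormedAddCommGroup W] [NormedSpace ℝ W]
    [FiniteDimensional ℝ W]
    (T : V →L[ℝ] W) (C : Set V) (hclosed : IsClosed C)
    (hadd : ∀ x ∈ C, ∀ y ∈ C, x + y ∈ C)
    (hsmul : ∀ x ∈ C, ∀ r : ℝ, 0 < r → r • x ∈ C)
    (D S : Set W) (hSD : S ⊆ D) (hdense : D ⊆ closure S)
    (κ : ℝ) (hκ : 0 < κ)
    (hlift : ∀ s ∈ S, ∃ c ∈ C, T c = s ∧ ‖c‖ ≤ κ * ‖s‖) :
    D ⊆ T '' C := by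
  intro d hd
  have : ProperSpace V := FiniteDimensional.proper ℝ V
  have hK : IsCompact (C ∩ Metric.closedBall (0 : V) (κ * (‖d‖ + 1))) :=
    (isCompact_closedBall _ _).inter_left hclosed
  have hcl : IsClosed (T '' (C ∩ Metric.closedBall (0 : V) (κ * (‖d‖ + 1)))) :=
    (hK.image T.continuous).isClosed
  have hmem : d ∈ closure (T '' (C ∩ Metric.closedBall (0 : V) (κ * (‖d‖ + 1)))) := by
    rw [Metric.mem_closure_iff]
    intro ε hε
    obtain ⟨s, hs, hds⟩ := Metric.mem_closure_iff.1 (hdense hd) (min ε 1) (by positivity)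
    obtain ⟨c, hc, hTc, hn⟩ := hlift s hs
    refine ⟨s, ⟨c, ⟨hc, ?_⟩, hTc⟩, hds.trans_le (min_le_left _ _)⟩
    have h1 : ‖s - d‖ < 1 := by
      rw [← dist_eq_norm, dist_comm]
      exact hds.trans_le (min_le_right _ _)
    have h2 : ‖s‖ ≤ ‖d‖ + 1 := by
      have := norm_sub_norm_le s d
      linarith
    rw [mem_closedBall_zero_iff]
    exact hn.trans (mul_le_mul_of_nonneg_left h2 hκ.le)
  rw [hcl.closure_eq] at hmem
  exact Set.image_mono Set.inter_subset_left hmem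
end
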